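/- As n → ∞, Var(R_n)/n converges to 1/12, where R_n is the number of descents of a uniformly random derangement of S_n and Var(R_n) = (1/d_n) Σ_{π derangement of {1,…,n}} (des(π) − μ_n)², with μ_n the expected number of descents of a uniformly random derangement of S_n and d_n the number of derangements of {1,…,n}. -/

import Mathlib

open Finset

/-- The number of descents of a permutation of `Fin n`:
positions `i` with `i+1 < n` and `π(i) > π(i+1)`. -/
def descents {n : ℕ} (π : Equiv.Perm (Fin n)) : ℕ :=
  (Finset.univ.filter fun i : Fin n =>
    ∃ h : (i : ℕ) + 1 < n, π ⟨(i : ℕ) + 1, h⟩ < π i).card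

/-- The derangements of the symmetric group `S_n`. -/
def derangementSet (n : ℕ) : Finset (Equiv.Perm (Fin n)) :=
  Finset.univ.filter fun π => ∀ i, π i ≠ i

/-- Mean number of descents of a uniformly random derangement of `S_n`. -/
noncomputable def derMean (n : ℕ) : ℝ :=
  (∑ π ∈ derangementSet n, (descents π : ℝ)) / (derangementSet n).card

/-- Variance of the number of descents of a uniformly random derangement of `S_n`. -/
noncomputable def derVar (n : ℕ) : ℝ :=
  (∑ π ∈ derangementSet n, ((descents π : ℝ) - derMean n) ^ 2) / (derangementSet n).card

/-!
Up to a constant, `des π` is a sum of centred descent indicators. Over all of `S_n` these have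
variance `1/4`, covariance `-1/12` at neighbouring positions and `0` otherwise, for a total of
`(n + 1)/12`. Both covariances come from symmetries: exchanging the two entries compared by an
indicator flips its sign, and cyclically permuting three consecutive entries averages the product of
the two indicators to `-1/12`. For derangements the same symmetries apply unless `π` maps one of the
two or three affected positions to another. This happens for `O((n-1)!)` permutations, and for
`O((n-2)!)` if it has to happen in two disjoint blocks simultaneously. Since `d_n ≥ n!/3` for large
`n`, the `O(n)` neighbouring pairs and `O(n²)` separated pairs together change the variance by
only `O(1)`.
-/

open Equiv (Perm swap)
open scoped Nat

section Counting

theorem card_filter_smul_eq_mul_card {G X : Type*} [Group G] [Fintype G] [Fintype X]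
    [DecidableEq X] [MulAction G X] [MulAction.IsPretransitive G X] (x y : X) :
    #{g : G | g • x = y} * Fintype.card X = Fintype.card G := by
  have card_fiber (z : X) : #{g : G | g • x = z} = #{g : G | g • x = y} := by
    obtain ⟨h, rfl⟩ := MulAction.exists_smul_eq G z y
    exact card_equiv (Equiv.mulLeft h) fun g => by simp [mul_smul]
  calc #{g : G | g • x = y} * Fintype.card X
      = ∑ z : X, #{g : G | g • x = z} := by simp [card_fiber, mul_comm]
    _ = Fintype.card G := (card_eq_sum_card_fiberwise fun _ _ => mem_coe.2 (mem_univ _)).symm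

variable {α : Type*} [Fintype α] [DecidableEq α]

theorem card_perm_filter_forall_apply_eq {k : ℕ} (x y : Fin k ↪ α) :
    #{π : Perm α | ∀ l, π (x l) = y l} = (Fintype.card α - k)! := by
  have := Perm.isMultiplyPretransitive α k
  have hk : k ≤ Fintype.card α := by simpa using Fintype.card_le_of_embedding x
  have hcard := card_filter_smul_eq_mul_card (G := Perm α) x y
  rw [Fintype.card_embedding_eq, Fintype.card_fin, Fintype.card_perm,
    ← Nat.factorial_mul_descFactorial hk] at hcard
  rw [← Nat.eq_of_mul_eq_mul_right (Nat.descFactorial_pos.2 hk) hcard]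
  simp [DFunLike.ext_iff]

theorem card_perm_filter_apply_eq (i a : α) :
    #{π : Perm α | π i = a} = (Fintype.card α - 1)! := by
  simpa using card_perm_filter_forall_apply_eq
    (⟨![i], Function.injective_of_subsingleton _⟩ : Fin 1 ↪ α)
    ⟨![a], Function.injective_of_subsingleton _⟩

theorem card_perm_filter_apply_eq_and_apply_eq {i j a b : α} (hij : i ≠ j) (hab : a ≠ b) :
    #{π : Perm α | π i = a ∧ π j = b} = (Fintype.card α - 2)! := by
  simpa [Fin.forall_fin_two, Function.Embedding.embFinTwo_apply_zero,
    Function.Embedding.embFinTwo_apply_one] using card_perm_filter_forall_apply_eq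
      (Function.Embedding.embFinTwo hij) (Function.Embedding.embFinTwo hab)

end Counting

section Cancellation

theorem sum_mul_right_of_mul_mem {G M : Type*} [Mul G] [IsRightCancelMul G] [AddCommMonoid M]
    {A : Finset G} {τ : G} (hA : ∀ π ∈ A, π * τ ∈ A) (f : G → M) :
    ∑ π ∈ A, f (π * τ) = ∑ π ∈ A, f π :=
  have injOn : Set.InjOn (· * τ) (A : Set G) := (mul_left_injective τ).injOn
  sum_nbij (· * τ) hA injOn (surjOn_of_injOn_of_card_le _ hA injOn le_rfl) fun _ _ => rfl

theorem sum_eq_zero_of_sum_mul_pow_eq_zero {G M : Type*} [RightCancelMonoid G] [AddCommMonoid M]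
    [IsAddTorsionFree M] {A : Finset G} {τ : G} (hA : ∀ π ∈ A, π * τ ∈ A) {m : ℕ} (hm : m ≠ 0)
    {f : G → M} (hf : ∀ π ∈ A, ∑ k ∈ range m, f (π * τ ^ k) = 0) : ∑ π ∈ A, f π = 0 := by
  have sum_mul_pow (k : ℕ) : ∑ π ∈ A, f (π * τ ^ k) = ∑ π ∈ A, f π := by
    refine sum_mul_right_of_mul_mem (fun π hπ => ?_) f
    induction k with
    | zero => simpa using hπ
    | succ k ih => simpa [pow_succ, mul_assoc] using hA _ ih
  refine (nsmul_eq_zero_iff_right hm).1 ?_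
  calc m • ∑ π ∈ A, f π = ∑ k ∈ range m, ∑ π ∈ A, f (π * τ ^ k) := by simp [sum_mul_pow]
    _ = ∑ π ∈ A, ∑ k ∈ range m, f (π * τ ^ k) := sum_comm
    _ = 0 := sum_eq_zero hf

end Cancellation

section Displacement

variable {α : Type*}

/-- The permutation `π` displaces `T` if `π(T)` is disjoint from `T`. Rearranging the values of a
derangement on a displaced set cannot create a fixed point. -/
def Displaces (π : Perm α) (T : Finset α) : Prop :=
  ∀ i ∈ T, π i ∉ T

instance [DecidableEq α] (π : Perm α) (T : Finset α) : Decidable (Displaces π T) :=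
  Finset.decidableDforallFinset

variable {π τ : Perm α} {S T : Finset α}

theorem exists_mem_offDiag_of_not_displaces (hπ : π ∈ derangements α) (h : ¬ Displaces π T) :
    ∃ x ∈ T.offDiag, π x.1 = x.2 := by
  simp only [Displaces, not_forall, not_not] at h
  obtain ⟨i, hi, hπi⟩ := h
  exact ⟨(i, π i), mem_offDiag.2 ⟨hi, hπi, (hπ i).symm⟩, rfl⟩

variable [Fintype α] [DecidableEq α]

theorem Displaces.mul_right (hπ : Displaces π T) (hτ : τ.support ⊆ T) : Displaces (π * τ) T :=
  fun i hi => hπ (τ i) ((Perm.isInvariant_of_support_le hτ i).2 hi)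

theorem displaces_mul_iff_of_disjoint (h : Disjoint S τ.support) :
    Displaces (π * τ) S ↔ Displaces π S :=
  forall₂_congr fun i hi => by
    rw [Perm.mul_apply, Perm.notMem_support.1 (disjoint_left.1 h hi)]

theorem Displaces.mul_mem_derangements (hT : Displaces π T) (hτ : τ.support ⊆ T)
    (hπ : π ∈ derangements α) : π * τ ∈ derangements α := by
  intro i hfix
  by_cases hi : i ∈ T
  · exact hT.mul_right hτ i hi (by rwa [hfix])
  · have : τ i = i := Perm.notMem_support.1 fun h => hi (hτ h)
    exact hπ i (by rwa [Perm.mul_apply, this] at hfix)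

theorem card_filter_not_displaces_le {A : Finset (Perm α)} (hA : ∀ π ∈ A, π ∈ derangements α)
    (T : Finset α) :
    #{π ∈ A | ¬ Displaces π T} ≤ #T.offDiag * (Fintype.card α - 1)! := by
  refine (card_le_card fun π hπ => ?_).trans (card_biUnion_le_card_mul T.offDiag
    (fun x => {π : Perm α | π x.1 = x.2}) _ fun x _ => (card_perm_filter_apply_eq x.1 x.2).le)
  obtain ⟨hπA, hT⟩ := mem_filter.1 hπ
  simpa using exists_mem_offDiag_of_not_displaces (hA π hπA) hT

theorem card_filter_not_displaces_and_not_displaces_le {A : Finset (Perm α)}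
    (hA : ∀ π ∈ A, π ∈ derangements α) (hST : Disjoint S T) :
    #{π ∈ A | ¬ Displaces π S ∧ ¬ Displaces π T} ≤
      #S.offDiag * #T.offDiag * (Fintype.card α - 2)! := by
  rw [← card_product]
  refine (card_le_card fun π hπ => ?_).trans (card_biUnion_le_card_mul (S.offDiag ×ˢ T.offDiag)
    (fun x => {π : Perm α | π x.1.1 = x.1.2 ∧ π x.2.1 = x.2.2}) _ fun x hx => ?_)
  · obtain ⟨hπA, hS, hT⟩ := mem_filter.1 hπ
    obtain ⟨x, hx, hπx⟩ := exists_mem_offDiag_of_not_displaces (hA π hπA) hS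
    obtain ⟨y, hy, hπy⟩ := exists_mem_offDiag_of_not_displaces (hA π hπA) hT
    exact mem_biUnion.2 ⟨(x, y), mk_mem_product hx hy, by simp [hπx, hπy]⟩
  · simp only [mem_product, mem_offDiag] at hx
    obtain ⟨⟨hx₁, hx₂, -⟩, hy₁, hy₂, -⟩ := hx
    exact (card_perm_filter_apply_eq_and_apply_eq (disjoint_iff_ne.1 hST _ hx₁ _ hy₁)
      (disjoint_iff_ne.1 hST _ hx₂ _ hy₂)).le

theorem sum_eq_sum_filter_not_displaces {M : Type*} [AddCommMonoid M] [IsAddTorsionFree M]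
    {A : Finset (Perm α)} (hτ : τ.support ⊆ T) (hA : ∀ π ∈ A, Displaces π T → π * τ ∈ A)
    {m : ℕ} (hm : m ≠ 0) {f : Perm α → M}
    (hf : ∀ π ∈ A, ∑ k ∈ range m, f (π * τ ^ k) = 0) :
    ∑ π ∈ A, f π = ∑ π ∈ A with ¬ Displaces π T, f π := by
  have mul_mem : ∀ π ∈ A.filter (Displaces · T), π * τ ∈ A.filter (Displaces · T) := by
    intro π hπ
    obtain ⟨hπA, hT⟩ := mem_filter.1 hπ
    exact mem_filter.2 ⟨hA π hπA hT, hT.mul_right hτ⟩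
  rw [← sum_filter_add_sum_filter_not A (Displaces · T),
    sum_eq_zero_of_sum_mul_pow_eq_zero mul_mem hm fun π hπ => hf π (mem_filter.1 hπ).1, zero_add]

end Displacement

section DerangementSums

theorem mem_derangementSet {n : ℕ} {π : Perm (Fin n)} :
    π ∈ derangementSet n ↔ π ∈ derangements (Fin n) := by
  simp [derangementSet, derangements]

theorem abs_sum_le_card_mul {ι R : Type*} [Ring R] [LinearOrder R] [IsOrderedRing R]
    {s : Finset ι} {f : ι → R} {c : R} (hf : ∀ i ∈ s, |f i| ≤ c) : |∑ i ∈ s, f i| ≤ #s * c := by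
  simpa using (abs_sum_le_sum_abs f s).trans (sum_le_card_nsmul s _ c hf)

variable {n m : ℕ} {τ : Perm (Fin n)} {T : Finset (Fin n)} {f : Perm (Fin n) → ℝ} {c : ℝ}

theorem abs_sum_derangementSet_le (hτ : τ.support ⊆ T) (hm : m ≠ 0)
    (hf : ∀ π, ∑ k ∈ range m, f (π * τ ^ k) = 0) (hc : ∀ π, |f π| ≤ c) :
    |∑ π ∈ derangementSet n, f π| ≤ #T.offDiag * (n - 1)! * c := by
  have hc₀ : 0 ≤ c := (abs_nonneg _).trans (hc 1)
  have mul_mem : ∀ π ∈ derangementSet n, Displaces π T → π * τ ∈ derangementSet n :=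
    fun π hπ hT => mem_derangementSet.2 (hT.mul_mem_derangements hτ (mem_derangementSet.1 hπ))
  rw [sum_eq_sum_filter_not_displaces hτ mul_mem hm fun π _ => hf π]
  refine (abs_sum_le_card_mul fun π _ => hc π).trans (mul_le_mul_of_nonneg_right ?_ hc₀)
  exact_mod_cast Fintype.card_fin n ▸
    card_filter_not_displaces_le (fun π => mem_derangementSet.1) T

theorem abs_sum_derangementSet_le_of_disjoint {l : ℕ} {σ : Perm (Fin n)} {S : Finset (Fin n)}
    (hST : Disjoint S T) (hσ : σ.support ⊆ S) (hτ : τ.support ⊆ T) (hl : l ≠ 0) (hm : m ≠ 0)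
    (hfσ : ∀ π, ∑ k ∈ range l, f (π * σ ^ k) = 0) (hfτ : ∀ π, ∑ k ∈ range m, f (π * τ ^ k) = 0)
    (hc : ∀ π, |f π| ≤ c) :
    |∑ π ∈ derangementSet n, f π| ≤ #S.offDiag * #T.offDiag * (n - 2)! * c := by
  have hc₀ : 0 ≤ c := (abs_nonneg _).trans (hc 1)
  have mul_mem_σ : ∀ π ∈ derangementSet n, Displaces π S → π * σ ∈ derangementSet n :=
    fun π hπ hS => mem_derangementSet.2 (hS.mul_mem_derangements hσ (mem_derangementSet.1 hπ))
  have mul_mem_τ : ∀ π ∈ {π ∈ derangementSet n | ¬ Displaces π S}, Displaces π T →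
      π * τ ∈ {π ∈ derangementSet n | ¬ Displaces π S} := by
    intro π hπ hT
    rw [mem_filter, mem_derangementSet] at hπ ⊢
    exact ⟨hT.mul_mem_derangements hτ hπ.1,
      (displaces_mul_iff_of_disjoint (hST.mono_right hτ)).not.2 hπ.2⟩
  rw [sum_eq_sum_filter_not_displaces hσ mul_mem_σ hl fun π _ => hfσ π,
    sum_eq_sum_filter_not_displaces hτ mul_mem_τ hm fun π _ => hfτ π, filter_filter]
  refine (abs_sum_le_card_mul fun π _ => hc π).trans (mul_le_mul_of_nonneg_right ?_ hc₀)
  exact_mod_cast Fintype.card_fin n ▸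
    card_filter_not_displaces_and_not_displaces_le (fun π => mem_derangementSet.1) hST

end DerangementSums

section CenteredInversion

variable {α : Type*} [LinearOrder α]

/-- The indicator of the inversion `π q < π p`, centred to have mean zero over all permutations
when `p ≠ q`. -/
noncomputable def centeredInversion (p q : α) (π : Perm α) : ℝ :=
  if π q < π p then 1 / 2 else -1 / 2

theorem centeredInversion_mul (p q : α) (π τ : Perm α) :
    centeredInversion p q (π * τ) = centeredInversion (τ p) (τ q) π :=
  rfl

theorem abs_centeredInversion (p q : α) (π : Perm α) : |centeredInversion p q π| = 1 / 2 := by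
  unfold centeredInversion
  split_ifs <;> norm_num [abs_div]

theorem centeredInversion_mul_self (p q : α) (π : Perm α) :
    centeredInversion p q π * centeredInversion p q π = 1 / 4 := by
  rw [← abs_mul_abs_self, abs_centeredInversion]
  norm_num

theorem abs_centeredInversion_mul_centeredInversion (p q r s : α) (π : Perm α) :
    |centeredInversion p q π * centeredInversion r s π| = 1 / 4 := by
  rw [abs_mul, abs_centeredInversion, abs_centeredInversion]
  norm_num

theorem centeredInversion_comm {p q : α} (hpq : p ≠ q) (π : Perm α) :
    centeredInversion q p π = -centeredInversion p q π := by
  have : π p ≠ π q := π.injective.ne hpq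
  unfold centeredInversion
  split_ifs <;> first | (exfalso; order) | norm_num

theorem centeredInversion_mul_swap {p q : α} (hpq : p ≠ q) (π : Perm α) :
    centeredInversion p q (π * swap p q) = -centeredInversion p q π := by
  rw [centeredInversion_mul, Equiv.swap_apply_left, Equiv.swap_apply_right,
    centeredInversion_comm hpq]

-- The comparisons `π q < π p`, `π r < π q` and `π p < π r` never all agree.
theorem centeredInversion_cyclic_sum {p q : α} (hpq : p ≠ q) (r : α) (π : Perm α) :
    centeredInversion p q π * centeredInversion q r π +
      centeredInversion q r π * centeredInversion r p π +
      centeredInversion r p π * centeredInversion p q π = -1 / 4 := by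
  have : π p ≠ π q := π.injective.ne hpq
  unfold centeredInversion
  split_ifs <;> first | (exfalso; order) | norm_num

end CenteredInversion

section InversionMoments

theorem card_offDiag_pair {α : Type*} [DecidableEq α] {p q : α} (hpq : p ≠ q) :
    #({p, q} : Finset α).offDiag = 2 := by
  rw [offDiag_card, card_pair hpq]

variable {n : ℕ} {p q r s : Fin n}

theorem abs_sum_centeredInversion_le (hpq : p ≠ q) :
    |∑ π ∈ derangementSet n, centeredInversion p q π| ≤ (n - 1)! := by
  have orbit_sum (π : Perm (Fin n)) :
      ∑ k ∈ range 2, centeredInversion p q (π * swap p q ^ k) = 0 := by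
    simp [sum_range_succ, centeredInversion_mul_swap hpq]
  have bound := abs_sum_derangementSet_le (Perm.support_swap hpq).subset two_ne_zero orbit_sum
    fun π => (abs_centeredInversion p q π).le
  rw [card_offDiag_pair hpq] at bound
  linarith

theorem abs_sum_centeredInversion_mul_le_of_disjoint (hpq : p ≠ q) (hrs : r ≠ s)
    (hdisj : Disjoint ({p, q} : Finset (Fin n)) {r, s}) :
    |∑ π ∈ derangementSet n, centeredInversion p q π * centeredInversion r s π| ≤ (n - 2)! := by
  obtain ⟨⟨hrp, hrq⟩, hsp, hsq⟩ : (r ≠ p ∧ r ≠ q) ∧ s ≠ p ∧ s ≠ q := by simpa using hdisj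
  have orbit_sum_pq (π : Perm (Fin n)) : ∑ k ∈ range 2, centeredInversion p q (π * swap p q ^ k) *
      centeredInversion r s (π * swap p q ^ k) = 0 := by
    simp [sum_range_succ, centeredInversion_mul_swap hpq, centeredInversion_mul r s,
      Equiv.swap_apply_of_ne_of_ne, *]
  have orbit_sum_rs (π : Perm (Fin n)) : ∑ k ∈ range 2, centeredInversion p q (π * swap r s ^ k) *
      centeredInversion r s (π * swap r s ^ k) = 0 := by
    simp [sum_range_succ, centeredInversion_mul_swap hrs, centeredInversion_mul p q,
      Equiv.swap_apply_of_ne_of_ne, Ne.symm, *]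
  have bound := abs_sum_derangementSet_le_of_disjoint hdisj (Perm.support_swap hpq).subset
    (Perm.support_swap hrs).subset two_ne_zero two_ne_zero orbit_sum_pq orbit_sum_rs
    fun π => (abs_centeredInversion_mul_centeredInversion p q r s π).le
  rw [card_offDiag_pair hpq, card_offDiag_pair hrs] at bound
  linarith

theorem abs_sum_centeredInversion_mul_add_le (hpq : p ≠ q) (hqr : q ≠ r) (hrp : r ≠ p) :
    |∑ π ∈ derangementSet n, (centeredInversion p q π * centeredInversion q r π + 1 / 12)| ≤
      2 * (n - 1)! := by
  let τ : Perm (Fin n) := swap p q * swap q r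
  have hnodup : [p, q, r].Nodup := by simp [hpq, hqr, hrp.symm]
  have τp : τ p = q := by simp [τ, Equiv.swap_apply_of_ne_of_ne hpq hrp.symm]
  have τq : τ q = r := by simp [τ, Equiv.swap_apply_of_ne_of_ne hrp hqr.symm]
  have τr : τ r = p := by simp [τ]
  have orbit_sum (π : Perm (Fin n)) : ∑ k ∈ range 3, (centeredInversion p q (π * τ ^ k) *
      centeredInversion q r (π * τ ^ k) + 1 / 12) = 0 := by
    have cyclic := centeredInversion_cyclic_sum hpq r π
    simp only [sum_range_succ, sum_range_zero, centeredInversion_mul, pow_succ, pow_zero,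
      one_mul, Perm.mul_apply, Perm.one_apply, τp, τq, τr]
    linarith
  have abs_le (π : Perm (Fin n)) :
      |centeredInversion p q π * centeredInversion q r π + 1 / 12| ≤ 1 / 3 := by
    refine (abs_add_le _ _).trans_eq ?_
    rw [abs_centeredInversion_mul_centeredInversion]
    norm_num [abs_div]
  have bound := abs_sum_derangementSet_le (Perm.support_swap_mul_swap hnodup).subset
    three_ne_zero orbit_sum abs_le
  rw [offDiag_card, card_eq_three.2 ⟨p, q, r, hpq, hrp.symm, hqr, rfl⟩] at bound
  linarith

end InversionMoments

section DescentMoments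

variable {m : ℕ}

/-- The indicator of a descent at position `i`, minus `1 / 2`. -/
noncomputable def centeredDescent (i : Fin m) (π : Perm (Fin (m + 1))) : ℝ :=
  centeredInversion i.castSucc i.succ π

/-- The indicator that `i` and `j` are consecutive, i.e. that the descent positions `i` and `j`
share exactly one entry of the permutation. -/
def adjacencyIndicator (i j : Fin m) : ℝ :=
  if (i : ℕ) + 1 = j ∨ (j : ℕ) + 1 = i then 1 else 0

theorem adjacencyIndicator_comm (i j : Fin m) :
    adjacencyIndicator i j = adjacencyIndicator j i := by
  simp only [adjacencyIndicator, or_comm]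

theorem sum_sum_adjacencyIndicator (m : ℕ) :
    ∑ i : Fin (m + 1), ∑ j, adjacencyIndicator i j = 2 * m := by
  have sum_succ : ∑ i : Fin (m + 1), ∑ j : Fin (m + 1),
      (if (i : ℕ) + 1 = j then (1 : ℝ) else 0) = m := by
    rw [Fin.sum_univ_castSucc]
    have last_eq_zero (j : Fin (m + 1)) : (m + 1 = (j : ℕ)) = False := eq_false (by omega)
    have succ_eq (i : Fin m) (j : Fin (m + 1)) : ((i : ℕ) + 1 = j) = (i.succ = j) := by
      simp [Fin.ext_iff]
    simp [last_eq_zero, succ_eq]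
  have split (i j : Fin (m + 1)) : adjacencyIndicator i j =
      (if (i : ℕ) + 1 = j then 1 else 0) + if (j : ℕ) + 1 = i then 1 else 0 := by
    unfold adjacencyIndicator
    split_ifs <;> first | omega | norm_num
  simp only [split, sum_add_distrib]
  rw [sum_comm (f := fun i j : Fin (m + 1) => if (j : ℕ) + 1 = i then (1 : ℝ) else 0), sum_succ]
  ring

theorem descents_eq_card_filter (π : Perm (Fin (m + 1))) :
    descents π = #{i : Fin m | π i.succ < π i.castSucc} := by
  rw [descents, ← card_map (Fin.castSuccEmb (n := m))]
  refine congr_arg card (Finset.ext fun i => ?_)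
  simp only [mem_filter, mem_univ, true_and, mem_map]
  constructor
  · rintro ⟨hi, hπ⟩
    exact ⟨⟨i, by omega⟩, hπ, rfl⟩
  · rintro ⟨j, hj, rfl⟩
    exact ⟨by simp, hj⟩

theorem descents_sub_eq_sum_centeredDescent (π : Perm (Fin (m + 1))) :
    (descents π : ℝ) - m / 2 = ∑ i, centeredDescent i π := by
  have summand (i : Fin m) :
      centeredDescent i π = (if π i.succ < π i.castSucc then 1 else 0) - 1 / 2 := by
    unfold centeredDescent centeredInversion
    split_ifs <;> norm_num
  simp [summand, descents_eq_card_filter, div_eq_mul_inv]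

theorem abs_sum_centeredDescent_mul_sub_le (i j : Fin (m + 1)) :
    |∑ π ∈ derangementSet (m + 2), (centeredDescent i π * centeredDescent j π -
        ((if i = j then 1 / 4 else 0) - adjacencyIndicator i j / 12))| ≤
      m ! + 2 * (m + 1)! * adjacencyIndicator i j := by
  wlog hij : i ≤ j generalizing i j
  · simpa only [mul_comm, eq_comm, adjacencyIndicator_comm] using this j i (le_of_not_ge hij)
  rcases hij.eq_or_lt with rfl | hlt
  · simp [centeredDescent, centeredInversion_mul_self, adjacencyIndicator]
  by_cases hadj : (i : ℕ) + 1 = j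
  · have castSucc_eq : j.castSucc = i.succ := by ext; simp [hadj]
    have bound := abs_sum_centeredInversion_mul_add_le (p := i.castSucc) (q := i.succ)
      (r := j.succ) i.castSucc_lt_succ.ne (by simpa using hlt.ne) (by grind)
    simp only [centeredDescent, adjacencyIndicator, hlt.ne, hadj, castSucc_eq]
    norm_num at bound ⊢
    linarith [Nat.cast_nonneg (α := ℝ) (m !)]
  · have disjoint : Disjoint ({i.castSucc, i.succ} : Finset _) {j.castSucc, j.succ} := by
      simp only [disjoint_insert_left, disjoint_singleton_left, mem_insert, mem_singleton,
        Fin.ext_iff, Fin.val_castSucc, Fin.val_succ]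
      omega
    have bound := abs_sum_centeredInversion_mul_le_of_disjoint i.castSucc_lt_succ.ne
      j.castSucc_lt_succ.ne disjoint
    have hadj' : ¬ ((j : ℕ) + 1 = i) := by omega
    simpa [centeredDescent, adjacencyIndicator, hlt.ne, hadj, hadj'] using bound

theorem abs_sum_descents_sub_le (m : ℕ) :
    |∑ π ∈ derangementSet (m + 2), ((descents π : ℝ) - (m + 1 : ℕ) / 2)| ≤ (m + 2)! := by
  simp only [descents_sub_eq_sum_centeredDescent]
  calc |∑ π ∈ derangementSet (m + 2), ∑ i, centeredDescent i π|
      = |∑ i : Fin (m + 1), ∑ π ∈ derangementSet (m + 2), centeredDescent i π| := by rw [sum_comm]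
    _ ≤ (m + 1 : ℕ) * (m + 1)! := by
      simpa [centeredDescent] using abs_sum_le_card_mul fun (i : Fin (m + 1)) (_ : i ∈ univ) =>
        abs_sum_centeredInversion_le i.castSucc_lt_succ.ne
    _ ≤ (m + 2)! := by
      rw [Nat.factorial_succ (m + 1)]
      exact_mod_cast Nat.mul_le_mul_right _ (Nat.le_succ _)

theorem sum_sum_ite_sub_adjacencyIndicator (m : ℕ) :
    ∑ i : Fin (m + 1), ∑ j, ((if i = j then 1 / 4 else 0) - adjacencyIndicator i j / 12) =
      ((m : ℝ) + 3) / 12 := by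
  simp only [sum_sub_distrib, ← sum_div, sum_sum_adjacencyIndicator, sum_ite_eq, mem_univ, if_true,
    sum_const, card_univ, Fintype.card_fin, nsmul_eq_mul]
  push_cast
  ring

theorem abs_sum_descents_sub_sq_sub_le (m : ℕ) :
    |∑ π ∈ derangementSet (m + 2),
        (((descents π : ℝ) - (m + 1 : ℕ) / 2) ^ 2 - ((m : ℝ) + 3) / 12)| ≤ (5 : ℝ) * (m + 2)! := by
  have expand (π : Perm (Fin (m + 2))) :
      ((descents π : ℝ) - (m + 1 : ℕ) / 2) ^ 2 - ((m : ℝ) + 3) / 12 =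
        ∑ i, ∑ j, (centeredDescent i π * centeredDescent j π -
          ((if i = j then 1 / 4 else 0) - adjacencyIndicator i j / 12)) := by
    rw [descents_sub_eq_sum_centeredDescent, sq, sum_mul_sum, ← sum_sum_ite_sub_adjacencyIndicator,
      ← sum_sub_distrib]
    exact sum_congr rfl fun i _ => (sum_sub_distrib _ _).symm
  rw [sum_congr rfl fun π _ => expand π, sum_comm]
  simp_rw [sum_comm (s := derangementSet (m + 2))]
  calc _ ≤ ∑ i : Fin (m + 1), ∑ j, ((m ! : ℝ) + 2 * (m + 1)! * adjacencyIndicator i j) :=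
      (abs_sum_le_sum_abs _ _).trans <| sum_le_sum fun i _ =>
        (abs_sum_le_sum_abs _ _).trans <| sum_le_sum fun j _ =>
          abs_sum_centeredDescent_mul_sub_le i j
    _ = (5 * m + 1) * (m + 1)! := by
      simp only [sum_add_distrib, ← mul_sum, sum_sum_adjacencyIndicator, sum_const, card_univ,
        Fintype.card_fin, nsmul_eq_mul, Nat.factorial_succ m]
      push_cast
      ring
    _ ≤ 5 * (m + 2)! := by
      rw [Nat.factorial_succ (m + 1)]
      push_cast
      nlinarith [Nat.cast_nonneg (α := ℝ) (m + 1)!]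

end DescentMoments

section Variance

theorem sum_sq_sub_mean_div_card {ι : Type*} {s : Finset ι} (hs : s.Nonempty) (f : ι → ℝ)
    (c : ℝ) :
    (∑ i ∈ s, (f i - (∑ j ∈ s, f j) / #s) ^ 2) / #s =
      (∑ i ∈ s, (f i - c) ^ 2) / #s - ((∑ i ∈ s, (f i - c)) / #s) ^ 2 := by
  have hcard : (#s : ℝ) ≠ 0 := by exact_mod_cast hs.card_ne_zero
  simp only [sub_sq, sum_add_distrib, sum_sub_distrib, ← sum_mul, ← mul_sum, sum_const,
    nsmul_eq_mul]
  field_simp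
  ring

theorem card_derangementSet (n : ℕ) : #(derangementSet n) = numDerangements n := by
  rw [← card_derangements_fin_eq_numDerangements]
  exact (Fintype.card_of_subtype _ fun _ => mem_derangementSet).symm

theorem eventually_factorial_le_three_mul_card_derangementSet :
    ∀ᶠ n : ℕ in Filter.atTop, (n ! : ℝ) ≤ 3 * #(derangementSet n) := by
  have exp_gt : (1 / 3 : ℝ) < Real.exp (-1) := by
    rw [Real.exp_neg, one_div]
    exact inv_strictAnti₀ (Real.exp_pos 1) Real.exp_one_lt_three
  filter_upwards [numDerangements_tendsto_inv_e.eventually_const_lt exp_gt] with n hn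
  rw [lt_div_iff₀ (by positivity)] at hn
  rw [card_derangementSet]
  linarith

theorem abs_derVar_sub_le {m : ℕ} (hcard : ((m + 2)! : ℝ) ≤ 3 * #(derangementSet (m + 2))) :
    |derVar (m + 2) - ((m : ℝ) + 3) / 12| ≤ 24 := by
  set d : ℝ := (#(derangementSet (m + 2)) : ℝ) with hd
  have d_pos : 0 < d := by linarith [Nat.cast_pos (α := ℝ).2 (m + 2).factorial_pos]
  have nonempty : (derangementSet (m + 2)).Nonempty := card_pos.1 (Nat.cast_pos.1 d_pos)
  have first_moment : |(∑ π ∈ derangementSet (m + 2),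
      ((descents π : ℝ) - (m + 1 : ℕ) / 2)) / d| ≤ 3 := by
    rw [abs_div, abs_of_pos d_pos, div_le_iff₀ d_pos]
    exact (abs_sum_descents_sub_le m).trans hcard
  have second_moment : |(∑ π ∈ derangementSet (m + 2),
      ((descents π : ℝ) - (m + 1 : ℕ) / 2) ^ 2) / d - ((m : ℝ) + 3) / 12| ≤ 15 := by
    have bound := abs_sum_descents_sub_sq_sub_le m
    rw [sum_sub_distrib, sum_const, nsmul_eq_mul, ← hd] at bound
    rw [div_sub' d_pos.ne', abs_div, abs_of_pos d_pos, div_le_iff₀ d_pos]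
    linarith
  rw [derVar, derMean, sum_sq_sub_mean_div_card nonempty _ ((m + 1 : ℕ) / 2), ← hd, sub_right_comm]
  refine (abs_sub _ _).trans ?_
  rw [abs_pow]
  linarith [pow_le_pow_left₀ (abs_nonneg _) first_moment 2]

theorem eventually_abs_derVar_sub_le :
    ∀ᶠ n : ℕ in Filter.atTop, |derVar n - ((n : ℝ) + 1) / 12| ≤ 24 := by
  filter_upwards [eventually_factorial_le_three_mul_card_derangementSet,
    Filter.eventually_ge_atTop 2] with n hcard hn
  obtain ⟨m, rfl⟩ := Nat.exists_eq_add_of_le' hn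
  convert abs_derVar_sub_le hcard using 4
  push_cast
  ring

end Variance

/-- `Var(R_n)/n → 1/12` for the number of descents in random derangements. -/
theorem var_descents_derangements_tendsto :
    Filter.Tendsto (fun n : ℕ => derVar n / n) Filter.atTop (nhds (1 / 12)) := by
  have error : Filter.Tendsto (fun n : ℕ => (derVar n - ((n : ℝ) + 1) / 12) / n) Filter.atTop
      (nhds 0) :=
    tendsto_bdd_div_atTop_nhds_zero
      (eventually_abs_derVar_sub_le.mono fun _ h => (abs_le.1 h).1)
      (eventually_abs_derVar_sub_le.mono fun _ h => (abs_le.1 h).2) tendsto_natCast_atTop_atTop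
  have main_term : Filter.Tendsto (fun n : ℕ => ((n : ℝ) + 1) / 12 / n) Filter.atTop
      (nhds (1 / 12)) := by
    have := (tendsto_one_div_atTop_nhds_zero_nat (𝕜 := ℝ)).const_add 1 |>.div_const 12
    simp only [add_zero] at this
    refine this.congr' ?_
    filter_upwards [Filter.eventually_ne_atTop 0] with n hn
    field_simp
  simpa [← add_div] using error.add main_term
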